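/- arXiv:1210.3353 — 2 statements merged into one kernel-verified Lean document; each statement's English description precedes it below -/
import Mathlib

section
/- Let F be a field of characteristic ≠ 2 and R a simple associative unital F-algebra with an involution * of the first kind, with S ⊊ R, with dim_{Z(R)} R > 4, and assume S is not a commutative set (there exist a, b ∈ S with ab ≠ ba). Then (K∘K)³ = R; in particular K⁶ = R. -/
/-- The set of skew-symmetric elements. -/
def skewSet12 (R : Type*) [Ring R] [StarRing R] : Set R := {r : R | star r = -r}

/-- `K∘K`: the additive subgroup generated by all `ab + ba` with `a, b ∈ K`. -/
def jordanKK12 (R : Type*) [Ring R] [StarRing R] : AddSubgroup R :=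
  AddSubgroup.closure {z : R | ∃ a ∈ skewSet12 R, ∃ b ∈ skewSet12 R, z = a * b + b * a}

namespace SkewJordan

variable {R : Type*} [Ring R]

/-- In a simple ring, an additive subgroup containing `R c R` for some `c ≠ 0` is everything. -/
theorem mem_of_forall_mul_mul_mem [IsSimpleRing R] {c : R} (hc : c ≠ 0) (A : AddSubgroup R)
    (hA : ∀ x y, x * c * y ∈ A) (r : R) : r ∈ A := by
  have hmem : r ∈ TwoSidedIdeal.span {c} := by
    have hne : TwoSidedIdeal.span {c} ≠ ⊥ := fun h => hc <| by
      have : c ∈ TwoSidedIdeal.span {c} := TwoSidedIdeal.subset_span rfl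
      rwa [h, TwoSidedIdeal.mem_bot] at this
    rw [(eq_bot_or_eq_top (TwoSidedIdeal.span {c})).resolve_left hne]
    trivial
  rw [TwoSidedIdeal.mem_span_iff_mem_addSubgroup_closure] at hmem
  refine (AddSubgroup.closure_le A).2 ?_ hmem
  rintro _ ⟨_, ⟨x, -, _, rfl, rfl⟩, y, -, rfl⟩
  exact hA x y

theorem eq_zero_of_forall_mul_mul_eq_zero [IsSimpleRing R] {c : R} (h : ∀ x, c * x * c = 0) :
    c = 0 := by
  by_contra hc
  have := mem_of_forall_mul_mul_mem hc (AddMonoidHom.mulLeft c).ker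
    (fun x y => by simp [AddMonoidHom.mem_ker, ← mul_assoc, h]) 1
  exact hc (by simpa [AddMonoidHom.mem_ker] using this)

/-- A Lie ideal of a simple ring containing two noncommuting elements contains all commutators. -/
theorem commutator_mem_of_lie_ideal [IsSimpleRing R] (U : AddSubgroup R)
    (hU : ∀ u ∈ U, ∀ x, u * x - x * u ∈ U) {a b : R} (ha : a ∈ U) (hb : b ∈ U)
    (hab : a * b ≠ b * a) (x y : R) : x * y - y * x ∈ U := by
  let N : AddSubgroup R :=
    { carrier := {x | ∀ y, x * y - y * x ∈ U}
      zero_mem' := fun y => by simp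
      add_mem' := fun {p q} hp hq y => by
        convert U.add_mem (hp y) (hq y) using 1
        noncomm_ring
      neg_mem' := fun {p} hp y => by
        convert U.neg_mem (hp y) using 1
        noncomm_ring }
  have hmul : ∀ p ∈ N, ∀ q ∈ N, p * q ∈ N := fun p hp q hq y => by
    convert U.add_mem (hp (q * y)) (hq (y * p)) using 1
    noncomm_ring
  have hUN : ∀ u ∈ U, u ∈ N := fun u hu y => hU u hu y
  have hright : ∀ r, (a * b - b * a) * r ∈ N := fun r => by
    convert N.sub_mem (hUN _ (hU a ha (b * r))) (hmul b (hUN b hb) _ (hUN _ (hU a ha r))) using 1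
    noncomm_ring
  refine mem_of_forall_mul_mul_mem (sub_ne_zero.2 hab) N (fun p q => ?_) x y
  convert N.sub_mem (hright (q * p)) (hUN _ (hright q p)) using 1
  noncomm_ring

/-- A central element of a simple ring is zero or has a central inverse. -/
theorem exists_central_inverse [IsSimpleRing R] {z : R} (hz : z ∈ Subring.center R) (h : z ≠ 0) :
    ∃ w ∈ Subring.center R, w * z = 1 := by
  obtain ⟨w, hw⟩ := (IsSimpleRing.isField_center R).mul_inv_cancel (a := ⟨z, hz⟩)
    (fun h' => h (congrArg Subtype.val h'))
  refine ⟨w, w.2, ?_⟩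
  rw [Subring.mem_center_iff.1 hz w]
  exact congrArg Subtype.val hw

theorem eq_zero_of_add_self {h : R} (hh : h + h = 1) {x : R} (hx : x + x = 0) : x = 0 := by
  rw [← one_mul x, ← hh, add_mul, ← mul_add, hx, mul_zero]

variable [StarRing R]

/-- The additive subgroup generated by all `[a, b] ∘ k` with `a, b, k` skew-symmetric. -/
def commutatorJordan (R : Type*) [Ring R] [StarRing R] : AddSubgroup R :=
  AddSubgroup.closure {z : R | ∃ a ∈ skewSet12 R, ∃ b ∈ skewSet12 R, ∃ k ∈ skewSet12 R,
    z = (a * b - b * a) * k + k * (a * b - b * a)}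

theorem commutator_mem_skewSet {a b : R} (ha : a ∈ skewSet12 R) (hb : b ∈ skewSet12 R) :
    a * b - b * a ∈ skewSet12 R := by
  simp only [skewSet12, Set.mem_ofPred_eq] at *
  simp [ha, hb]

theorem jordan_mem_skewSet {s a : R} (hs : star s = s) (ha : a ∈ skewSet12 R) :
    s * a + a * s ∈ skewSet12 R := by
  simp only [skewSet12, Set.mem_ofPred_eq] at *
  simp only [star_add, star_mul, hs, ha]
  noncomm_ring

theorem mem_commutatorJordan {a b k : R} (ha : a ∈ skewSet12 R) (hb : b ∈ skewSet12 R)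
    (hk : k ∈ skewSet12 R) :
    (a * b - b * a) * k + k * (a * b - b * a) ∈ commutatorJordan R :=
  AddSubgroup.subset_closure ⟨a, ha, b, hb, k, hk, rfl⟩

theorem commutatorJordan_le : commutatorJordan R ≤ jordanKK12 R := by
  refine (AddSubgroup.closure_le _).2 ?_
  rintro _ ⟨a, ha, b, hb, k, hk, rfl⟩
  exact AddSubgroup.subset_closure ⟨_, commutator_mem_skewSet ha hb, k, hk, rfl⟩

theorem lie_skew_mem_commutatorJordan {c t : R} (hc : c ∈ skewSet12 R)
    (ht : t ∈ commutatorJordan R) : t * c - c * t ∈ commutatorJordan R := by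
  refine (AddSubgroup.closure_le ((commutatorJordan R).comap
    (AddMonoidHom.mulRight c - AddMonoidHom.mulLeft c))).2 ?_ ht
  rintro _ ⟨a, ha, b, hb, k, hk, rfl⟩
  have h₁ := mem_commutatorJordan (commutator_mem_skewSet ha hc) hb hk
  have h₂ := mem_commutatorJordan ha (commutator_mem_skewSet hb hc) hk
  have h₃ := mem_commutatorJordan ha hb (commutator_mem_skewSet hk hc)
  change _ * c - c * _ ∈ commutatorJordan R
  convert add_mem (add_mem h₁ h₂) h₃ using 1
  noncomm_ring

theorem jordan_symm_mem_commutatorJordan {s t : R} (hs : star s = s)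
    (ht : t ∈ commutatorJordan R) : t * s + s * t ∈ commutatorJordan R := by
  refine (AddSubgroup.closure_le ((commutatorJordan R).comap
    (AddMonoidHom.mulRight s + AddMonoidHom.mulLeft s))).2 ?_ ht
  rintro _ ⟨a, ha, b, hb, k, hk, rfl⟩
  have hsa := jordan_mem_skewSet hs ha
  have hsb := jordan_mem_skewSet hs hb
  have h₀ := mem_commutatorJordan ha hb (jordan_mem_skewSet hs hk)
  have h₁ := mem_commutatorJordan hk hsa hb
  have h₂ := mem_commutatorJordan hk hb hsa
  have h₃ := mem_commutatorJordan hk hsb ha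
  have h₄ := mem_commutatorJordan hk ha hsb
  change _ * s + s * _ ∈ commutatorJordan R
  convert sub_mem h₀ (sub_mem (add_mem h₁ h₂) (add_mem h₃ h₄)) using 1
  noncomm_ring

/-- A nonzero additive subgroup closed under `t ↦ t x + x* t` contains all symmetric elements. -/
theorem symm_mem_of_mul_add_star_mul_mem [IsSimpleRing R] {h : R} (hh : h + h = 1)
    (hcen : ∀ x, h * x = x * h) (hstar : star h = h) (T : AddSubgroup R)
    (hT : ∀ t ∈ T, ∀ x, t * x + star x * t ∈ T) {t : R} (ht : t ∈ T) (ht0 : t ≠ 0)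
    (hts : star t = t) {s : R} (hs : star s = s) : s ∈ T := by
  have hxy : ∀ x y, star y * t * x + star x * t * y ∈ T := fun x y => by
    convert sub_mem (hT _ (hT t ht x) y) (hT t ht (x * y)) using 1
    simp only [star_mul]
    noncomm_ring
  let φ : R →+ R := AddMonoidHom.mulRight (h * s) +
    (AddMonoidHom.mulLeft (h * s)).comp (starAddEquiv : R ≃+ R).toAddMonoidHom
  have hsum : h * s + h * s = s := by rw [← add_mul, hh, one_mul]
  have := mem_of_forall_mul_mul_mem ht0 (T.comap φ) (fun x y => by
    change x * t * y * (h * s) + (h * s) * star (x * t * y) ∈ T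
    convert hxy (y * (h * s)) (star x) using 1
    simp only [star_mul, star_star, hs, hstar, hts, hcen]
    noncomm_ring) 1
  change 1 * (h * s) + h * s * star 1 ∈ T at this
  simpa [hsum] using this

theorem exists_symm_add_skew {h : R} (hh : h + h = 1) (hcen : ∀ x, h * x = x * h)
    (hstar : star h = h) (x : R) : ∃ s k : R, star s = s ∧ k ∈ skewSet12 R ∧ x = s + k := by
  refine ⟨h * (x + star x), h * (x - star x), ?_, ?_, ?_⟩
  · simp only [star_mul, star_add, star_star, hstar, ← hcen]
    rw [add_comm]
  · simp only [skewSet12, Set.mem_ofPred_eq, star_mul, star_sub, star_star, hstar, ← hcen]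
    noncomm_ring
  · rw [← mul_add, add_add_sub_cancel, mul_add, ← add_mul, hh, one_mul]

theorem star_eq_of_mem_commutatorJordan {t : R} (ht : t ∈ commutatorJordan R) : star t = t := by
  refine (AddSubgroup.closure_le ((starAddEquiv : R ≃+ R).toAddMonoidHom.eqLocus
    (AddMonoidHom.id R))).2 ?_ ht
  rintro _ ⟨a, ha, b, hb, k, hk, rfl⟩
  have hc : star (a * b - b * a) = _ := commutator_mem_skewSet ha hb
  have hk' : star k = -k := hk
  change star ((a * b - b * a) * k + k * (a * b - b * a)) =
    (a * b - b * a) * k + k * (a * b - b * a)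
  rw [star_add, star_mul, star_mul, hc, hk']
  noncomm_ring

/-- If `[K, K] ∘ K = 0` then the skew-symmetric elements commute. -/
theorem skew_commute_of_commutatorJordan_eq_bot [IsSimpleRing R] {h : R} (hh : h + h = 1)
    (hcen : ∀ x, h * x = x * h) (hstar : star h = h) (hbot : commutatorJordan R = ⊥) {a b : R}
    (ha : a ∈ skewSet12 R) (hb : b ∈ skewSet12 R) : a * b = b * a := by
  rw [← sub_eq_zero]
  have hl := commutator_mem_skewSet ha hb
  have hanti : ∀ k ∈ skewSet12 R, (a * b - b * a) * k + k * (a * b - b * a) = 0 := fun k hk => by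
    have := mem_commutatorJordan ha hb hk
    rwa [hbot, AddSubgroup.mem_bot] at this
  generalize a * b - b * a = l at hl hanti
  have hsq : l * l = 0 := eq_zero_of_add_self hh (hanti l hl)
  refine eq_zero_of_forall_mul_mul_eq_zero fun x => ?_
  obtain ⟨s, k, hs, hk, rfl⟩ := exists_symm_add_skew hh hcen hstar x
  have h₁ : l * s * l = 0 := by
    refine eq_zero_of_add_self hh ?_
    have := hanti _ (jordan_mem_skewSet hs hl)
    calc l * s * l + l * s * l
        = l * (s * l + l * s) + (s * l + l * s) * l - (l * l) * s - s * (l * l) := by noncomm_ring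
      _ = 0 := by rw [this, hsq]; simp
  have h₂ : l * k * l = 0 := by
    calc l * k * l = (l * k + k * l) * l - k * (l * l) := by noncomm_ring
      _ = 0 := by rw [hanti k hk, hsq]; simp
  rw [mul_add, add_mul, h₁, h₂, add_zero]

/-- If the skew-symmetric elements commute, the simple ring has dimension at most `4` over its
center: it is spanned by `1, a, s, s a` with `a` skew and `s` symmetric anticommuting with `a`. -/
theorem rank_le_four_of_skew_commute [IsSimpleRing R] {h : R} (hh : h + h = 1)
    (hcen : ∀ x, h * x = x * h) (hstar : star h = h)
    (hfirst : ∀ z ∈ Subring.center R, star z = z)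
    (hproper : ∃ r : R, star r ≠ r)
    (hcomm : ∀ a ∈ skewSet12 R, ∀ b ∈ skewSet12 R, a * b = b * a) :
    Module.rank (Subring.center R) R ≤ 4 := by
  have hdec := exists_symm_add_skew hh hcen hstar
  have hhc : h ∈ Subring.center R := Subring.mem_center_iff.2 fun g => (hcen g).symm
  have hmulc : ∀ {z w : R}, z ∈ Subring.center R → w ∈ Subring.center R →
      z * w ∈ Subring.center R := fun hz hw => mul_mem hz hw
  have hhalf : ∀ x : R, h * (x + x) = x := fun x => by rw [mul_add, ← add_mul, hh, one_mul]
  -- squares, hence products, of skew elements are central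
  have hsq : ∀ a ∈ skewSet12 R, a * a ∈ Subring.center R := fun a ha => by
    refine Subring.mem_center_iff.2 fun x => ?_
    obtain ⟨s, k, hs, hk, rfl⟩ := hdec x
    have h₁ := hcomm a ha _ (jordan_mem_skewSet hs ha)
    have h₂ := hcomm a ha k hk
    have h₃ : s * (a * a) = a * a * s := by
      have : s * (a * a) - a * a * s = (s * a + a * s) * a - a * (s * a + a * s) := by noncomm_ring
      rwa [h₁, sub_self, sub_eq_zero] at this
    rw [mul_add, add_mul, h₃, ← mul_assoc k, ← h₂, mul_assoc a k, ← h₂, ← mul_assoc a a]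
  have hprod : ∀ a ∈ skewSet12 R, ∀ b ∈ skewSet12 R, a * b ∈ Subring.center R := fun a ha b hb => by
    have hab : a + b ∈ skewSet12 R := by
      simp only [skewSet12, Set.mem_ofPred_eq] at *
      rw [star_add, ha, hb]; abel
    have := hmulc hhc (sub_mem (sub_mem (hsq _ hab) (hsq a ha)) (hsq b hb))
    have e : (a + b) * (a + b) - a * a - b * b = a * b + a * b := by
      calc (a + b) * (a + b) - a * a - b * b = a * b + b * a := by noncomm_ring
        _ = a * b + a * b := by rw [hcomm a ha b hb]
    rwa [e, hhalf] at this
  -- a skew element with nonzero square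
  obtain ⟨a, ha, haa⟩ : ∃ a ∈ skewSet12 R, a * a ≠ 0 := by
    by_contra! hzero
    obtain ⟨r, hr⟩ := hproper
    obtain ⟨s, k, hs, hk, rfl⟩ := hdec r
    have hk0 : k = 0 := by
      refine eq_zero_of_forall_mul_mul_eq_zero fun x => ?_
      obtain ⟨t, l, ht, hl, rfl⟩ := hdec x
      have hkk := hzero k hk
      have h₁ : k * t * k = 0 := by
        have hj := jordan_mem_skewSet ht hk
        have hc := Subring.mem_center_iff.1 (hprod k hk _ hj)
        have hc1 : k * (t * k + k * t) = k * t * k := by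
          rw [mul_add, ← mul_assoc, ← mul_assoc, hkk, zero_mul, add_zero]
        rw [hc1] at hc
        have hz : k * (k * t * k) = 0 := by rw [← mul_assoc, ← mul_assoc, hkk]; simp
        by_contra hne
        obtain ⟨w, -, hw⟩ := exists_central_inverse (hc1 ▸ hprod k hk _ hj) hne
        have : k = 0 := by
          rw [← one_mul k, ← hw, mul_assoc, ← hc k, hz, mul_zero]
        exact hne (by rw [this]; simp)
      have h₂ : k * l * k = 0 := by rw [hcomm k hk l hl, mul_assoc, hkk, mul_zero]
      rw [mul_add, add_mul, h₁, h₂, add_zero]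
    exact hr (by rw [hk0, add_zero, hs])
  have ha' : star a = -a := ha
  obtain ⟨w, hwc, hw⟩ := exists_central_inverse (hsq a ha) haa
  have hwcomm := Subring.mem_center_iff.1 hwc
  have hskew : ∀ k ∈ skewSet12 R, ∃ z ∈ Subring.center R, k = z * a := fun k hk =>
    ⟨w * (a * k), hmulc hwc (hprod a ha k hk), by
      rw [hcomm a ha k hk, mul_assoc, mul_assoc, Subring.mem_center_iff.1 (hsq a ha),
        ← mul_assoc, hw, one_mul]⟩
  -- symmetric elements split into a central part and a part anticommuting with `a`
  have hsymm : ∀ s : R, star s = s → ∃ z ∈ Subring.center R, ∃ t : R, star t = t ∧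
      t * a + a * t = 0 ∧ s = z + t := fun s hs => by
    obtain ⟨z, hz, hza⟩ := hskew _ (jordan_mem_skewSet hs ha)
    have hhz := hmulc hhc hz
    refine ⟨h * z, hhz, s - h * z, ?_, ?_, by abel⟩
    · rw [star_sub, hs, hfirst _ hhz]
    · have e : (h * z) * a + (h * z) * a = z * a := by
        rw [← add_mul, ← add_mul, hh, one_mul]
      calc (s - h * z) * a + a * (s - h * z)
          = (s * a + a * s) - (h * z * a + a * (h * z)) := by noncomm_ring
        _ = 0 := by rw [Subring.mem_center_iff.1 hhz a, e, hza, sub_self]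
  have hcancel : ∀ t : R, t * a = 0 → t = 0 := fun t ht => by
    rw [← mul_one t, ← hw, ← hwcomm, ← mul_assoc, ← mul_assoc, ht, zero_mul, zero_mul]
  have hanti : ∀ s t : R, star s = s → star t = t → s * a + a * s = 0 → t * a + a * t = 0 →
      s * t + t * s ∈ Subring.center R := fun s t hs ht hsa hta => by
    obtain ⟨z, hz, u, -, hua, hu⟩ := hsymm (s * t + t * s) (by simp [hs, ht, add_comm])
    have h₁ : (s * t + t * s) * a = a * (s * t + t * s) := by
      rw [← sub_eq_zero]
      calc (s * t + t * s) * a - a * (s * t + t * s)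
          = s * (t * a + a * t) - (s * a + a * s) * t + (t * (s * a + a * s)
            - (t * a + a * t) * s) := by noncomm_ring
        _ = 0 := by rw [hsa, hta]; simp
    rw [hu, add_mul, mul_add, ← Subring.mem_center_iff.1 hz a, add_right_inj] at h₁
    rw [← h₁] at hua
    rwa [hu, hcancel u (eq_zero_of_add_self hh hua), add_zero]
  have hspan : ∃ s : R, ∀ t : R, star t = t → t * a + a * t = 0 →
      ∃ z ∈ Subring.center R, ∃ z' ∈ Subring.center R, t = z * s + z' * (s * a) := by
    by_cases hex : ∃ s : R, star s = s ∧ s * a + a * s = 0 ∧ s * s ≠ 0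
    · obtain ⟨s, hs, hsa, hss⟩ := hex
      have hssc : s * s ∈ Subring.center R := by
        simpa only [hhalf] using hmulc hhc (hanti s s hs hs hsa hsa)
      obtain ⟨v, hvc, hv⟩ := exists_central_inverse hssc hss
      refine ⟨s, fun t ht hta => ?_⟩
      have hc := hanti s t hs ht hsa hta
      obtain ⟨z, hz, hza⟩ := hskew (s * t - t * s) (by
        simp only [skewSet12, Set.mem_ofPred_eq, star_sub, star_mul, hs, ht, neg_sub])
      have hcs := Subring.mem_center_iff.1 hc s
      have hzs := Subring.mem_center_iff.1 hz s
      refine ⟨v * h * (s * t + t * s), hmulc (hmulc hvc hhc) hc, v * h * z,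
        hmulc (hmulc hvc hhc) hz, ?_⟩
      symm
      calc v * h * (s * t + t * s) * s + v * h * z * (s * a)
          = v * h * ((s * t + t * s) * s) + v * h * ((z * s) * a) := by noncomm_ring
        _ = v * h * (s * (s * t + t * s)) + v * h * (s * (z * a)) := by
            rw [← hcs, ← hzs, mul_assoc s z a]
        _ = v * (h * (s * s * t + s * s * t)) := by rw [← hza]; noncomm_ring
        _ = t := by rw [hhalf, ← mul_assoc, hv, one_mul]
    · push Not at hex
      refine ⟨0, fun s hs hsa => ⟨0, zero_mem _, 0, zero_mem _, ?_⟩⟩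
      have hss := hex s hs hsa
      rw [zero_mul, zero_mul, add_zero]
      refine eq_zero_of_forall_mul_mul_eq_zero fun x => ?_
      obtain ⟨p, k, hp, hk, rfl⟩ := hdec x
      obtain ⟨z, hz, t, ht, hta, rfl⟩ := hsymm p hp
      obtain ⟨y, hy, rfl⟩ := hskew k hk
      have hst : s * t + t * s = 0 := by
        have h₁ := hex (s + t) (by rw [star_add, hs, ht]) (by
          calc (s + t) * a + a * (s + t) = (s * a + a * s) + (t * a + a * t) := by noncomm_ring
            _ = 0 := by rw [hsa, hta, add_zero])
        calc s * t + t * s = (s + t) * (s + t) - s * s - t * t := by noncomm_ring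
          _ = 0 := by rw [h₁, hss, hex t ht hta]; simp
      calc s * (z + t + y * a) * s
          = (s * z) * s + (s * t + t * s) * s - t * (s * s) + (s * y) * a * s := by noncomm_ring
        _ = (z * s) * s + (s * t + t * s) * s - t * (s * s) + (y * s) * a * s := by
            rw [Subring.mem_center_iff.1 hz s, Subring.mem_center_iff.1 hy s]
        _ = z * (s * s) + (s * t + t * s) * s - t * (s * s) + y * (s * a + a * s) * s
            - y * a * (s * s) := by noncomm_ring
        _ = 0 := by rw [hss, hst, hsa]; simp
  obtain ⟨s, hs⟩ := hspan
  have htop : Submodule.span (Subring.center R) (Set.range ![1, a, s, s * a]) = ⊤ := by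
    refine Submodule.eq_top_iff'.2 fun x => ?_
    have hgen : ∀ (i : Fin 4), ∀ z ∈ Subring.center R, z * ![1, a, s, s * a] i ∈
        Submodule.span (Subring.center R) (Set.range ![1, a, s, s * a]) := fun i z hz =>
      Submodule.smul_mem _ (⟨z, hz⟩ : Subring.center R) (Submodule.subset_span ⟨i, rfl⟩)
    obtain ⟨p, k, hp, hk, rfl⟩ := hdec x
    obtain ⟨z, hz, t, ht, hta, rfl⟩ := hsymm p hp
    obtain ⟨y, hy, rfl⟩ := hskew k hk
    obtain ⟨u, hu, u', hu', rfl⟩ := hs t ht hta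
    have h₀ := hgen 0 z hz
    rw [show ![1, a, s, s * a] 0 = 1 from rfl, mul_one] at h₀
    exact add_mem (add_mem h₀ (add_mem (hgen 2 u hu) (hgen 3 u' hu'))) (hgen 1 y hy)
  have hcard := Cardinal.mk_range_le_lift (f := ![1, a, s, s * a])
  have hle := rank_span_le (R := Subring.center R) (Set.range ![1, a, s, s * a])
  rw [htop, rank_top] at hle
  exact hle.trans (by simpa using hcard)

/-- If `S` is not commutative, an additive subgroup containing `S³` is everything. -/
theorem mem_of_symm_mul_symm_mul_symm_mem [IsSimpleRing R] {a b : R} (ha : star a = a)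
    (hb : star b = b) (hab : a * b ≠ b * a) (C : AddSubgroup R)
    (hC : ∀ p q r : R, star p = p → star q = q → star r = r → p * q * r ∈ C) (x : R) : x ∈ C := by
  let U : AddSubgroup R := AddSubgroup.closure {z | ∃ p q : R, star p = p ∧ star q = q ∧ z = p * q}
  have hU : ∀ p q : R, star p = p → star q = q → p * q ∈ U := fun p q hp hq =>
    AddSubgroup.subset_closure ⟨p, q, hp, hq, rfl⟩
  have hlie : ∀ u ∈ U, ∀ x, u * x - x * u ∈ U := fun u hu x => by
    refine (AddSubgroup.closure_le (U.comap
      (AddMonoidHom.mulRight x - AddMonoidHom.mulLeft x))).2 ?_ hu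
    rintro _ ⟨p, q, hp, hq, rfl⟩
    change p * q * x - x * (p * q) ∈ U
    have h₁ := hU p (q * x + star x * q) hp (by simp [hq, add_comm])
    have h₂ := hU (p * star x + x * p) q (by simp [hp, add_comm]) hq
    convert sub_mem h₁ h₂ using 1
    noncomm_ring
  have hSU : ∀ s : R, star s = s → s ∈ U := fun s hs => by simpa using hU s 1 hs (star_one R)
  have hcomm := commutator_mem_of_lie_ideal U hlie (hSU a ha) (hSU b hb) hab
  have hUC : ∀ s : R, star s = s → ∀ u ∈ U, u * s ∈ C := fun s hs u hu => by
    refine (AddSubgroup.closure_le (C.comap (AddMonoidHom.mulRight s))).2 ?_ hu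
    rintro _ ⟨p, q, hp, hq, rfl⟩
    exact hC p q s hp hq hs
  have hleft : ∀ y x, y * (x * a - a * x) ∈ C := fun y x => by
    have h₁ := hUC 1 (star_one R) _ (hcomm x (y * a))
    have h₂ := hUC a ha _ (hcomm x y)
    convert sub_mem h₁ h₂ using 1
    noncomm_ring
  refine mem_of_forall_mul_mul_mem (sub_ne_zero.2 hab) C (fun y z => ?_) x
  convert sub_mem (hleft (y * b) z) (hleft y (b * z)) using 1
  noncomm_ring

theorem symm_mem_jordanKK [IsSimpleRing R] {h : R} (hh : h + h = 1)
    (hcen : ∀ x, h * x = x * h) (hstar : star h = h)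
    (hfirst : ∀ z ∈ Subring.center R, star z = z) (hproper : ∃ r : R, star r ≠ r)
    (hdim : 4 < Module.rank (Subring.center R) R) {s : R} (hs : star s = s) :
    s ∈ jordanKK12 R := by
  refine commutatorJordan_le ?_
  have hbot : commutatorJordan R ≠ ⊥ := fun hbot => hdim.not_ge <|
    rank_le_four_of_skew_commute hh hcen hstar hfirst hproper fun a ha b hb =>
      skew_commute_of_commutatorJordan_eq_bot hh hcen hstar hbot ha hb
  obtain ⟨t, ht, ht0⟩ := (commutatorJordan R).bot_or_exists_ne_zero.resolve_left hbot
  refine symm_mem_of_mul_add_star_mul_mem hh hcen hstar _ (fun t ht x => ?_) ht ht0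
    (star_eq_of_mem_commutatorJordan ht) hs
  obtain ⟨p, k, hp, hk, rfl⟩ := exists_symm_add_skew hh hcen hstar x
  have hk' : star k = -k := hk
  convert add_mem (jordan_symm_mem_commutatorJordan hp ht)
    (lie_skew_mem_commutatorJordan hk ht) using 1
  rw [star_add, hp, hk']
  noncomm_ring

/-- `(K∘K)³ ⊆ K⁶`. -/
theorem jordanKK_mul_mul_mem (D : AddSubgroup R)
    (hD : ∀ a₁ ∈ skewSet12 R, ∀ a₂ ∈ skewSet12 R, ∀ a₃ ∈ skewSet12 R, ∀ a₄ ∈ skewSet12 R,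
      ∀ a₅ ∈ skewSet12 R, ∀ a₆ ∈ skewSet12 R, a₁ * a₂ * a₃ * a₄ * a₅ * a₆ ∈ D)
    {p q w : R} (hp : p ∈ jordanKK12 R) (hq : q ∈ jordanKK12 R) (hw : w ∈ jordanKK12 R) :
    p * q * w ∈ D := by
  refine (AddSubgroup.closure_le (D.comap
    ((AddMonoidHom.mulRight w).comp (AddMonoidHom.mulRight q)))).2 ?_ hp
  rintro _ ⟨a, ha, b, hb, rfl⟩
  refine (AddSubgroup.closure_le (D.comap
    ((AddMonoidHom.mulRight w).comp (AddMonoidHom.mulLeft (a * b + b * a))))).2 ?_ hq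
  rintro _ ⟨c, hc, d, hd, rfl⟩
  refine (AddSubgroup.closure_le (D.comap
    (AddMonoidHom.mulLeft ((a * b + b * a) * (c * d + d * c))))).2 ?_ hw
  rintro _ ⟨e, he, f, hf, rfl⟩
  have key : ∀ a ∈ skewSet12 R, ∀ b ∈ skewSet12 R, ∀ c ∈ skewSet12 R, ∀ d ∈ skewSet12 R,
      a * b * c * d * (e * f + f * e) ∈ D := fun a ha b hb c hc d hd => by
    convert add_mem (hD a ha b hb c hc d hd e he f hf) (hD a ha b hb c hc d hd f hf e he) using 1
    noncomm_ring
  change (a * b + b * a) * (c * d + d * c) * (e * f + f * e) ∈ D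
  convert add_mem (add_mem (key a ha b hb c hc d hd) (key a ha b hb d hd c hc))
    (add_mem (key b hb a ha c hc d hd) (key b hb a ha d hd c hc)) using 1
  noncomm_ring

end SkewJordan

/-- If `R` is simple, `dim_{Z(R)} R > 4` and `S` is not a commutative set, then
`(K∘K)³ = R`; in particular `K⁶ = R`. -/
theorem stmt_12 (F R : Type*) [Field F] [Ring R] [Algebra F R] [StarRing R]
    [IsSimpleRing R]
    (hchar : (2 : F) ≠ 0)
    (hfirst : Set.center R ⊆ {r : R | star r = r})
    (hproper : {r : R | star r = r} ≠ Set.univ)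
    (hdim : 4 < Module.rank (Subring.center R) R)
    (hnc : ∃ a ∈ {r : R | star r = r}, ∃ b ∈ {r : R | star r = r}, a * b ≠ b * a) :
    (AddSubgroup.closure {z : R | ∃ p ∈ jordanKK12 R, ∃ q ∈ jordanKK12 R,
        ∃ w ∈ jordanKK12 R, z = p * q * w} : Set R) = Set.univ ∧
    (AddSubgroup.closure {z : R | ∃ a₁ ∈ skewSet12 R, ∃ a₂ ∈ skewSet12 R,
        ∃ a₃ ∈ skewSet12 R, ∃ a₄ ∈ skewSet12 R, ∃ a₅ ∈ skewSet12 R, ∃ a₆ ∈ skewSet12 R,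
        z = a₁ * a₂ * a₃ * a₄ * a₅ * a₆} : Set R) = Set.univ := by
  obtain ⟨a, ha, b, hb, hab⟩ := hnc
  have hcen : ∀ x, algebraMap F R 2⁻¹ * x = x * algebraMap F R 2⁻¹ := Algebra.commutes _
  have hh : algebraMap F R 2⁻¹ + algebraMap F R 2⁻¹ = 1 := by
    rw [← map_add, ← two_mul, mul_inv_cancel₀ hchar, map_one]
  have hfirst' : ∀ z ∈ Subring.center R, star z = z := fun z hz => hfirst hz
  have hstar := hfirst' _ (Subring.mem_center_iff.2 fun x => (hcen x).symm)
  have hproper' : ∃ r : R, star r ≠ r := by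
    by_contra! hall
    exact hproper (Set.eq_univ_of_forall hall)
  have hS : ∀ s : R, star s = s → s ∈ jordanKK12 R := fun s hs =>
    SkewJordan.symm_mem_jordanKK hh hcen hstar hfirst' hproper' hdim hs
  refine ⟨Set.eq_univ_of_forall fun x => ?_, Set.eq_univ_of_forall fun x => ?_⟩
  · refine SkewJordan.mem_of_symm_mul_symm_mul_symm_mem ha hb hab _ (fun p q r hp hq hr => ?_) x
    exact AddSubgroup.subset_closure ⟨p, hS p hp, q, hS q hq, r, hS r hr, rfl⟩
  · refine SkewJordan.mem_of_symm_mul_symm_mul_symm_mem ha hb hab _ (fun p q r hp hq hr => ?_) x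
    refine SkewJordan.jordanKK_mul_mul_mem _ ?_ (hS p hp) (hS q hq) (hS r hr)
    exact fun a₁ h₁ a₂ h₂ a₃ h₃ a₄ h₄ a₅ h₅ a₆ h₆ =>
      AddSubgroup.subset_closure ⟨a₁, h₁, a₂, h₂, a₃, h₃, a₄, h₄, a₅, h₅, a₆, h₆, rfl⟩
end

section
/- Let F be a field of characteristic ≠ 2 and R a simple associative unital F-algebra with an involution * of the first kind, with S ⊊ R, with dim_{Z(R)} R > 4, and assume S is not a commutative set. If in addition there exist x, y ∈ S such that xy − yx ≠ 0 and xsy ∈ S² for every s ∈ S, then (K∘K)² = R; in particular K⁴ = R. -/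
/-- The set of skew-symmetric elements. -/
def skewSet13 (R : Type*) [Ring R] [StarRing R] : Set R := {r : R | star r = -r}

/-- `K∘K`: the additive subgroup generated by all `ab + ba` with `a, b ∈ K`. -/
def jordanKK13 (R : Type*) [Ring R] [StarRing R] : AddSubgroup R :=
  AddSubgroup.closure {z : R | ∃ a ∈ skewSet13 R, ∃ b ∈ skewSet13 R, z = a * b + b * a}

section LieIdeals

variable {R : Type*} [Ring R]

/-- The additive subgroup generated by all products of two elements of `A`. -/
def prodSpan (A : Set R) : AddSubgroup R :=
  AddSubgroup.closure {z : R | ∃ a ∈ A, ∃ b ∈ A, z = a * b}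

theorem mul_mem_prodSpan {A : Set R} {a b : R} (ha : a ∈ A) (hb : b ∈ A) :
    a * b ∈ prodSpan A :=
  AddSubgroup.subset_closure ⟨a, ha, b, hb, rfl⟩

theorem prodSpan_le {A : Set R} {U : AddSubgroup R} (h : ∀ a ∈ A, ∀ b ∈ A, a * b ∈ U) :
    prodSpan A ≤ U := by
  refine (AddSubgroup.closure_le U).2 ?_
  rintro _ ⟨a, ha, b, hb, rfl⟩
  exact h a ha b hb

/-- An additive subgroup stable under commutation with every element of the ring. -/
def IsLieIdeal (U : AddSubgroup R) : Prop :=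
  ∀ u ∈ U, ∀ r : R, u * r - r * u ∈ U

theorem eq_top_of_mul_mem [IsSimpleRing R] {U : AddSubgroup R} {c : R} (hc : c ≠ 0)
    (h : ∀ a b : R, a * c * b ∈ U) : U = ⊤ := by
  let I : TwoSidedIdeal R := TwoSidedIdeal.mk' {x | ∀ a b : R, a * x * b ∈ U}
    (fun a b => by simp)
    (fun {x y} hx hy a b => by
      have := U.add_mem (hx a b) (hy a b)
      rwa [← add_mul, ← mul_add] at this)
    (fun {x} hx a b => by simpa using hx a b)
    (fun {x y} hy a b => by simpa [mul_assoc] using hy (a * x) b)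
    (fun {x y} hx a b => by simpa [mul_assoc] using hx a (y * b))
  have hmem : ∀ x, x ∈ I ↔ ∀ a b : R, a * x * b ∈ U := fun x => by
    simp only [I, TwoSidedIdeal.mem_mk', Set.mem_ofPred_eq]
  have h1 : (1 : R) ∈ I := IsSimpleRing.one_mem_of_ne_zero_mem I hc ((hmem c).2 h)
  refine (AddSubgroup.eq_top_iff' U).2 fun x => ?_
  simpa using (hmem 1).1 h1 x 1

theorem eq_zero_or_eq_zero_of_mul_mul_eq_zero [IsSimpleRing R] {a b : R}
    (h : ∀ x, a * x * b = 0) : a = 0 ∨ b = 0 := by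
  by_contra! hab
  have htop : (AddMonoidHom.mulLeft a).ker = ⊤ :=
    eq_top_of_mul_mem hab.2 fun x y => by
      simp [AddMonoidHom.mem_ker, ← mul_assoc, h]
  have h1 : (1 : R) ∈ (AddMonoidHom.mulLeft a).ker := htop ▸ AddSubgroup.mem_top _
  exact hab.1 (by simpa [AddMonoidHom.mem_ker] using h1)

theorem IsLieIdeal.eq_top [IsSimpleRing R] {U : AddSubgroup R} (hU : IsLieIdeal U) {c : R}
    (hc : c ≠ 0) (h : ∀ r, c * r ∈ U) : U = ⊤ := by
  refine eq_top_of_mul_mem hc fun a b => ?_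
  have := U.sub_mem (h (b * a)) (hU _ (h b) a)
  convert this using 1
  noncomm_ring

/-- A noncommutative Lie ideal of a simple ring contains all commutators. -/
theorem IsLieIdeal.commutator_mem [IsSimpleRing R] {U : AddSubgroup R} (hU : IsLieIdeal U)
    {u v : R} (hu : u ∈ U) (hv : v ∈ U) (huv : u * v - v * u ≠ 0) (r s : R) :
    r * s - s * r ∈ U := by
  let T : AddSubgroup R :=
    { carrier := {x | ∀ y, x * y - y * x ∈ U}
      zero_mem' := fun y => by simp
      add_mem' := fun {a b} ha hb y => by
        have := U.add_mem (ha y) (hb y)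
        convert this using 1
        noncomm_ring
      neg_mem' := fun {a} ha y => by
        have := U.neg_mem (ha y)
        convert this using 1
        noncomm_ring }
  have hUT : ∀ x ∈ U, x ∈ T := fun x hx => hU x hx
  have hT : IsLieIdeal T := fun x hx y => hUT _ (hx y)
  have hmul : ∀ x ∈ T, ∀ y ∈ T, x * y ∈ T := fun x hx y hy z => by
    have := U.add_mem (hx (y * z)) (hy (z * x))
    convert this using 1
    noncomm_ring
  have htop : T = ⊤ := hT.eq_top huv fun x => by
    have h1 : u * (v * x) - v * x * u ∈ T := hUT _ (hU u hu (v * x))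
    have h2 : v * (u * x - x * u) ∈ T := hmul _ (hUT v hv) _ (hUT _ (hU u hu x))
    have := T.sub_mem h1 h2
    convert this using 1
    noncomm_ring
  have hr : r ∈ T := htop ▸ AddSubgroup.mem_top _
  exact hr s

/-- A commutative Lie ideal of a simple ring of characteristic not two is central. -/
theorem IsLieIdeal.mem_center_of_commute [IsSimpleRing R]
    (h2 : ∀ x : R, x + x = 0 → x = 0) {U : AddSubgroup R} (hU : IsLieIdeal U)
    (hcomm : ∀ u ∈ U, ∀ v ∈ U, u * v = v * u) {u : R} (hu : u ∈ U) : u ∈ Subring.center R := by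
  have hd : ∀ r, u * (u * r - r * u) - (u * r - r * u) * u = 0 := fun r =>
    sub_eq_zero.2 (hcomm u hu _ (hU u hu r))
  have hdd : ∀ r s, (u * r - r * u) * (u * s - s * u) = 0 := fun r s => by
    apply h2
    calc _ = (u * (u * (r * s) - r * s * u) - (u * (r * s) - r * s * u) * u)
          - (u * (u * r - r * u) - (u * r - r * u) * u) * s
          - r * (u * (u * s - s * u) - (u * s - s * u) * u) := by noncomm_ring
      _ = 0 := by rw [hd, hd, hd]; simp
  have hdsd : ∀ r s, (u * r - r * u) * s * (u * r - r * u) = 0 := fun r s => by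
    calc _ = (u * r - r * u) * (u * (s * r) - s * r * u)
          - (u * r - r * u) * (u * s - s * u) * r := by noncomm_ring
      _ = 0 := by rw [hdd, hdd]; simp
  refine Subring.mem_center_iff.2 fun r => ?_
  have := eq_zero_or_eq_zero_of_mul_mul_eq_zero (hdsd r)
  exact (sub_eq_zero.1 (this.elim id id)).symm

theorem half_mul_add_half_mul {h : R} (hh : h + h = 1) (x : R) : h * x + h * x = x := by
  rw [← add_mul, hh, one_mul]

theorem eq_zero_or_eq_zero_of_mem_center [IsSimpleRing R] {z a : R} (hz : z ∈ Subring.center R)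
    (h : z * a = 0) : z = 0 ∨ a = 0 :=
  eq_zero_or_eq_zero_of_mul_mul_eq_zero fun x => by
    rw [← Subring.mem_center_iff.1 hz, mul_assoc, h, mul_zero]

theorem exists_smul_inverse [IsSimpleRing R] {w : R} (hw : w ∈ Subring.center R)
    (hw0 : w ≠ 0) : ∃ v : Subring.center R, v • w = 1 := by
  obtain ⟨v, hv⟩ := (IsSimpleRing.isField_center R).mul_inv_cancel
    (a := ⟨w, hw⟩) (by simpa [Subtype.ext_iff] using hw0)
  refine ⟨v, ?_⟩
  rw [mul_comm] at hv
  exact congrArg Subtype.val hv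

end LieIdeals

section Involution

variable {R : Type*} [Ring R] [StarRing R]

theorem star_central_mul {z : R} (hz : z ∈ Subring.center R) (hs : star z = z) (x : R) :
    star (z * x) = z * star x := by
  rw [star_mul, hs, Subring.mem_center_iff.1 hz]

/-- Every element is a sum of a symmetric and a skew-symmetric element. -/
theorem exists_symm_add_skew {h : R} (hc : h ∈ Subring.center R) (hs : star h = h)
    (hh : h + h = 1) (r : R) : ∃ s k : R, star s = s ∧ star k = -k ∧ r = s + k := by
  refine ⟨h * (r + star r), h * (r - star r), ?_, ?_, ?_⟩
  · rw [star_central_mul hc hs, star_add, star_star, add_comm]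
  · rw [star_central_mul hc hs, star_sub, star_star, ← mul_neg, neg_sub]
  · rw [← mul_add, show r + star r + (r - star r) = r + r by abel, mul_add,
      half_mul_add_half_mul hh]

theorem isLieIdeal_prodSpan {h : R} (hc : h ∈ Subring.center R) (hs : star h = h)
    (hh : h + h = 1) {A : Set R}
    (hsymm : ∀ a ∈ A, ∀ s, star s = s → a * s + s * a ∈ A)
    (hskew : ∀ a ∈ A, ∀ k, star k = -k → a * k - k * a ∈ A) :
    IsLieIdeal (prodSpan A) := by
  intro u hu r
  obtain ⟨s, k, hs', hk', rfl⟩ := exists_symm_add_skew hc hs hh r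
  induction hu using AddSubgroup.closure_induction with
  | mem x hx =>
    obtain ⟨a, ha, b, hb, rfl⟩ := hx
    have h1 := mul_mem_prodSpan ha (hsymm b hb s hs')
    have h2 := mul_mem_prodSpan (hsymm a ha s hs') hb
    have h3 := mul_mem_prodSpan ha (hskew b hb k hk')
    have h4 := mul_mem_prodSpan (hskew a ha k hk') hb
    have := AddSubgroup.add_mem _ (AddSubgroup.sub_mem _ h1 h2) (AddSubgroup.add_mem _ h3 h4)
    convert this using 1
    noncomm_ring
  | zero => simp
  | add x y _ _ hx hy =>
    have := AddSubgroup.add_mem _ hx hy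
    convert this using 1
    noncomm_ring
  | neg x _ hx =>
    have := AddSubgroup.neg_mem _ hx
    convert this using 1
    noncomm_ring

theorem isLieIdeal_prodSpan_symm {h : R} (hc : h ∈ Subring.center R) (hs : star h = h)
    (hh : h + h = 1) : IsLieIdeal (prodSpan {r : R | star r = r}) := by
  refine isLieIdeal_prodSpan hc hs hh (fun a ha s hs' => ?_) (fun a ha k hk => ?_)
  · change star a = a at ha
    change star (a * s + s * a) = _
    simp only [star_add, star_mul, ha, hs', add_comm]
  · change star a = a at ha
    change star (a * k - k * a) = _
    simp only [star_sub, star_mul, ha, hk]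
    noncomm_ring

theorem isLieIdeal_prodSpan_skew {h : R} (hc : h ∈ Subring.center R) (hs : star h = h)
    (hh : h + h = 1) : IsLieIdeal (prodSpan (skewSet13 R)) := by
  refine isLieIdeal_prodSpan hc hs hh (fun a ha s hs' => ?_) (fun a ha k hk => ?_)
  · change star a = -a at ha
    change star (a * s + s * a) = _
    simp only [star_add, star_mul, ha, hs']
    noncomm_ring
  · change star a = -a at ha
    change star (a * k - k * a) = _
    simp only [star_sub, star_mul, ha, hk]
    noncomm_ring

/-- If `x S y ⊆ S²` for noncommuting symmetric `x, y`, then `S² = R`. -/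
theorem prodSpan_symm_eq_top [IsSimpleRing R] {h : R} (hc : h ∈ Subring.center R)
    (hs : star h = h) (hh : h + h = 1) {x y : R} (hx : star x = x) (hy : star y = y)
    (hxy : x * y - y * x ≠ 0)
    (hmem : ∀ s, star s = s → x * s * y ∈ prodSpan {r : R | star r = r}) :
    prodSpan {r : R | star r = r} = ⊤ := by
  set U := prodSpan {r : R | star r = r}
  have hone : star (1 : R) = 1 := star_one R
  have hSU : ∀ s : R, star s = s → s ∈ U := fun s hs' => by
    simpa using mul_mem_prodSpan (A := {r : R | star r = r}) hs' hone
  have hLie : IsLieIdeal U := isLieIdeal_prodSpan_symm hc hs hh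
  have hcomm := hLie.commutator_mem (hSU x hx) (hSU y hy) hxy
  refine hLie.eq_top hxy fun r => ?_
  obtain ⟨s, k, hs', hk', rfl⟩ := exists_symm_add_skew hc hs hh r
  rw [mul_add]
  refine U.add_mem ?_ ?_
  · have h1 : y * x * s ∈ U := by
      have := U.sub_mem (hmem s hs') (hcomm (x * s) y)
      convert this using 1
      noncomm_ring
    have h2 : (x * y + y * x) * s ∈ U :=
      mul_mem_prodSpan (A := {r : R | star r = r})
        (by change star _ = _; simp [hx, hy, add_comm]) hs'
    have := U.sub_mem (U.sub_mem h2 h1) h1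
    convert this using 1
    noncomm_ring
  · have h1 : star (h * ((x * y - y * x) * k + k * (x * y - y * x))) =
        h * ((x * y - y * x) * k + k * (x * y - y * x)) := by
      rw [star_central_mul hc hs]
      congr 1
      simp only [star_add, star_mul, star_sub, hx, hy, hk']
      noncomm_ring
    have := U.add_mem (hcomm (h * (x * y - y * x)) k) (hSU _ h1)
    convert this using 1
    have hk : k * (h * (x * y - y * x)) = h * (k * (x * y - y * x)) := by
      rw [← mul_assoc, Subring.mem_center_iff.1 hc, mul_assoc]
    rw [hk]
    refine (half_mul_add_half_mul hh ((x * y - y * x) * k)).symm.trans ?_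
    noncomm_ring

/-- If `S² = R` and `K²` contains all commutators, then `K² = R`. -/
theorem prodSpan_skew_eq_top [IsSimpleRing R] {h : R} (hc : h ∈ Subring.center R)
    (hs : star h = h) (hh : h + h = 1) (hS : prodSpan {r : R | star r = r} = ⊤)
    {d : R} (hd : star d = -d) (hd0 : d ≠ 0)
    (hcomm : ∀ r s : R, r * s - s * r ∈ prodSpan (skewSet13 R)) :
    prodSpan (skewSet13 R) = ⊤ := by
  set U := prodSpan (skewSet13 R)
  have hKU : ∀ k : R, star k = -k → k ∈ U := fun k hk => by
    have hle : prodSpan {r : R | star r = r} ≤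
        U.comap (AddMonoidHom.id R - (starAddEquiv : R ≃+ R).toAddMonoidHom) := by
      refine prodSpan_le fun a ha b hb => ?_
      change star a = a at ha
      change star b = b at hb
      change a * b - star (a * b) ∈ U
      rw [star_mul, ha, hb]
      exact hcomm a b
    have hk' : h * k ∈ prodSpan {r : R | star r = r} := hS ▸ AddSubgroup.mem_top _
    have h1 : h * k - star (h * k) ∈ U := hle hk'
    rwa [star_central_mul hc hs, hk, mul_neg, sub_neg_eq_add, half_mul_add_half_mul hh] at h1
  refine (isLieIdeal_prodSpan_skew hc hs hh).eq_top hd0 fun r => ?_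
  obtain ⟨s, k, hs', hk', rfl⟩ := exists_symm_add_skew hc hs hh r
  rw [mul_add]
  refine U.add_mem ?_ (mul_mem_prodSpan hd hk')
  have h1 : star (h * (d * s + s * d)) = -(h * (d * s + s * d)) := by
    rw [star_central_mul hc hs, ← mul_neg]
    congr 1
    simp only [star_add, star_mul, hd, hs']
    noncomm_ring
  have := U.add_mem (hcomm (h * d) s) (hKU _ h1)
  convert this using 1
  have hsd : s * (h * d) = h * (s * d) := by
    rw [← mul_assoc, Subring.mem_center_iff.1 hc, mul_assoc]
  rw [hsd]
  refine (half_mul_add_half_mul hh (d * s)).symm.trans ?_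
  noncomm_ring

/-- If `K² = R`, then every symmetric element lies in `K∘K`. -/
theorem mem_jordanKK13_of_prodSpan_skew_eq_top {h : R} (hc : h ∈ Subring.center R)
    (hs : star h = h) (hh : h + h = 1) (hK : prodSpan (skewSet13 R) = ⊤) {s : R}
    (hs' : star s = s) : s ∈ jordanKK13 R := by
  have hle : prodSpan (skewSet13 R) ≤
      (jordanKK13 R).comap (AddMonoidHom.id R + (starAddEquiv : R ≃+ R).toAddMonoidHom) := by
    refine prodSpan_le fun a ha b hb => ?_
    change a * b + star (a * b) ∈ jordanKK13 R
    refine AddSubgroup.subset_closure ⟨a, ha, b, hb, ?_⟩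
    change star a = -a at ha
    change star b = -b at hb
    rw [star_mul, ha, hb, neg_mul_neg]
  have hm : h * s ∈ prodSpan (skewSet13 R) := hK ▸ AddSubgroup.mem_top _
  have h1 : h * s + star (h * s) ∈ jordanKK13 R := hle hm
  rwa [star_central_mul hc hs, hs', half_mul_add_half_mul hh] at h1

/-- If `K²` is central and `K ≠ 0`, some skew-symmetric element has nonzero square. -/
theorem exists_skew_mul_self_ne_zero [IsSimpleRing R] {h : R}
    (hc : h ∈ Subring.center R) (hs : star h = h) (hh : h + h = 1)
    (hKK : ∀ a b : R, star a = -a → star b = -b → a * b ∈ Subring.center R)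
    {d : R} (hd : star d = -d) (hd0 : d ≠ 0) : ∃ a : R, star a = -a ∧ a * a ≠ 0 := by
  by_contra! hsq
  have hzero : ∀ b : R, star b = -b → d * b = 0 := fun b hb => by
    have hz := hKK d b hd hb
    have : d * b * d = 0 := by
      rw [← Subring.mem_center_iff.1 hz, ← mul_assoc, hsq d hd, zero_mul]
    exact (eq_zero_or_eq_zero_of_mem_center hz this).resolve_right hd0
  have hdd : ∀ r, d * r * d = 0 := fun r => by
    obtain ⟨s, k, hs', hk, rfl⟩ := exists_symm_add_skew hc hs hh r
    have h1 : d * (s * d + d * s) = 0 := hzero _ (by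
      simp only [star_add, star_mul, hd, hs']
      noncomm_ring)
    calc d * (s + k) * d = d * (s * d + d * s) - d * d * s + d * k * d := by noncomm_ring
      _ = 0 := by rw [h1, hsq d hd, hzero k hk]; simp
  exact hd0 ((eq_zero_or_eq_zero_of_mul_mul_eq_zero hdd).elim id id)

/-- If `K²` is central, `R` is at most four-dimensional over its center
as soon as `K ≠ 0` and `S` is noncommutative. -/
theorem rank_le_four_of_skew_mul_skew_mem_center [IsSimpleRing R] {h : R}
    (hc : h ∈ Subring.center R) (hs : star h = h) (hh : h + h = 1)
    (hfirst : ∀ z ∈ Subring.center R, star z = z)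
    (hKK : ∀ a b : R, star a = -a → star b = -b → a * b ∈ Subring.center R)
    {d : R} (hd : star d = -d) (hd0 : d ≠ 0)
    {s t : R} (hs' : star s = s) (ht : star t = t) (hst : s * t ≠ t * s) :
    Module.rank (Subring.center R) R ≤ 4 := by
  obtain ⟨a, ha, haa⟩ := exists_skew_mul_self_ne_zero hc hs hh hKK hd hd0
  obtain ⟨v, hv⟩ := exists_smul_inverse (hKK a a ha ha) haa
  have h2 : ∀ x : R, x + x = 0 → x = 0 := fun x hx => by
    rw [← half_mul_add_half_mul hh x, ← mul_add, hx, mul_zero]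
  have hstar : ∀ (z : Subring.center R) (x : R), star (z • x) = z • star x := fun z x =>
    star_central_mul z.2 (hfirst z z.2) x
  let η : Subring.center R := ⟨h, hc⟩
  have hη : ∀ x : R, η • x + η • x = x := half_mul_add_half_mul hh
  have hmul_a : ∀ x : R, a * x = 0 → x = 0 := fun x hx => by
    calc x = (v • (a * a)) * x := by rw [hv, one_mul]
      _ = v • (a * (a * x)) := by rw [smul_mul_assoc, mul_assoc]
      _ = 0 := by rw [hx]; simp
  -- Skew-symmetric elements are central multiples of `a`.
  have hskew : ∀ b : R, star b = -b → ∃ z : Subring.center R, b = z • a := fun b hb => by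
    refine ⟨v * ⟨b * a, hKK b a hb ha⟩, ?_⟩
    calc b = b * (v • (a * a)) := by rw [hv, mul_one]
      _ = v • (b * a * a) := by rw [mul_smul_comm, mul_assoc]
      _ = _ := by rw [mul_smul]; rfl
  -- Symmetric elements are central modulo elements anticommuting with `a`.
  have hsymm : ∀ b : R, star b = b → ∃ (z : Subring.center R) (p : R),
      star p = p ∧ a * p + p * a = 0 ∧ b = z • (1 : R) + p := fun b hb => by
    obtain ⟨z, hz⟩ := hskew (a * b + b * a) (by
      simp only [star_add, star_mul, ha, hb]
      noncomm_ring)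
    refine ⟨η * z, b - (η * z) • (1 : R), ?_, ?_, by abel⟩
    · rw [star_sub, hb, hstar, star_one]
    · have : a * (b - (η * z) • (1 : R)) + (b - (η * z) • (1 : R)) * a =
          (a * b + b * a) - (η • (z • a) + η • (z • a)) := by
        simp only [mul_sub, sub_mul, mul_smul_comm, smul_mul_assoc, mul_one, one_mul, mul_smul]
        abel
      rw [this, hη, hz, sub_self]
  have hjordan : ∀ p q : R, star p = p → a * p + p * a = 0 → star q = q →
      a * q + q * a = 0 → ∃ z : Subring.center R, p * q + q * p = z • (1 : R) := by
    intro p q hp hap hq haq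
    obtain ⟨z, u, -, hau, hu⟩ := hsymm (p * q + q * p) (by
      simp only [star_add, star_mul, hp, hq, add_comm])
    refine ⟨z, ?_⟩
    have hcomm : a * (p * q + q * p) - (p * q + q * p) * a = 0 := by
      calc _ = (a * p + p * a) * q - p * (a * q + q * a)
            + (a * q + q * a) * p - q * (a * p + p * a) := by noncomm_ring
        _ = 0 := by rw [hap, haq]; simp
    have hau' : a * u - u * a = 0 := by
      rw [hu] at hcomm
      simpa [mul_add, add_mul] using hcomm
    have : u = 0 := hmul_a u (h2 _ (by
      calc a * u + a * u = (a * u + u * a) + (a * u - u * a) := by abel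
        _ = 0 := by rw [hau, hau', add_zero]))
    rw [hu, this, add_zero]
  -- Some symmetric element anticommuting with `a` has nonzero square.
  obtain ⟨q, hq, haq, hqq⟩ : ∃ q : R, star q = q ∧ a * q + q * a = 0 ∧ q * q ≠ 0 := by
    by_contra! hsq
    obtain ⟨z, p, hp, hap, rfl⟩ := hsymm s hs'
    obtain ⟨z', u, hu, hau, rfl⟩ := hsymm t ht
    have hpu : p * u + u * p = 0 := by
      have h0 := hsq (p + u) (by rw [star_add, hp, hu]) (by
        calc _ = (a * p + p * a) + (a * u + u * a) := by noncomm_ring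
          _ = 0 := by rw [hap, hau, add_zero])
      calc p * u + u * p = (p + u) * (p + u) - p * p - u * u := by noncomm_ring
        _ = 0 := by rw [h0, hsq p hp hap, hsq u hu hau]; simp
    have hne : p * u - u * p ≠ 0 := fun h0 => hst (by
      have hpu' : p * u = u * p := sub_eq_zero.1 h0
      simp only [add_mul, mul_add, smul_mul_assoc, mul_smul_comm, one_mul, mul_one, hpu']
      module)
    obtain ⟨w, hw⟩ := hskew (p * u - u * p) (by
      simp only [star_sub, star_mul, hp, hu]
      noncomm_ring)
    have hwap : (w : R) * (a * p) = 0 := by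
      calc (w : R) * (a * p) = (w • a) * p := (mul_assoc _ _ _).symm
        _ = (p * u + u * p) * p - u * (p * p) - u * (p * p) := by rw [← hw]; noncomm_ring
        _ = 0 := by rw [hpu, hsq p hp hap]; simp
    rcases eq_zero_or_eq_zero_of_mem_center w.2 hwap with h0 | h0
    · exact hne (by rw [hw]; exact (congrArg (· * a) h0).trans (zero_mul a))
    · exact hne (by rw [hmul_a p h0]; simp)
  have hqc : q * q ∈ Subring.center R := by
    obtain ⟨z, hz⟩ := hjordan q q hq haq hq haq
    have : q * q = ((η * z : Subring.center R) : R) := by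
      rw [← hη (q * q), ← smul_add, hz, ← mul_smul]
      exact mul_one _
    rw [this]
    exact Subtype.property _
  obtain ⟨ω, hω⟩ := exists_smul_inverse hqc hqq
  have hspan : ∀ r : R, r ∈ Submodule.span (Subring.center R) {1, a, q, q * a} := fun r => by
    set W := Submodule.span (Subring.center R) {1, a, q, q * a}
    have h1W : (1 : R) ∈ W := Submodule.subset_span (by simp)
    have haW : a ∈ W := Submodule.subset_span (by simp)
    have hqW : q ∈ W := Submodule.subset_span (by simp)
    have hqaW : q * a ∈ W := Submodule.subset_span (by simp)
    obtain ⟨b, k, hb, hk, rfl⟩ := exists_symm_add_skew hc hs hh r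
    obtain ⟨y, rfl⟩ := hskew k hk
    obtain ⟨z, p, hp, hap, rfl⟩ := hsymm b hb
    refine W.add_mem (W.add_mem (W.smul_mem _ h1W) ?_) (W.smul_mem _ haW)
    obtain ⟨z₁, hz₁⟩ := hjordan q p hq haq hp hap
    obtain ⟨z₂, hz₂⟩ := hskew (q * p - p * q) (by
      simp only [star_sub, star_mul, hp, hq]
      noncomm_ring)
    have hqp : q * p = η • (z₁ • (1 : R) + z₂ • a) := by
      rw [← hz₁, ← hz₂]
      refine (hη (q * p)).symm.trans ?_
      module
    have : p = ω • η • (z₁ • q + z₂ • (q * a)) := by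
      calc p = (ω • (q * q)) * p := by rw [hω, one_mul]
        _ = ω • (q * (q * p)) := by rw [smul_mul_assoc, mul_assoc]
        _ = _ := by rw [hqp]; simp only [mul_smul_comm, mul_add, mul_one]
    rw [this]
    exact W.smul_mem _ (W.smul_mem _ (W.add_mem (W.smul_mem _ hqW) (W.smul_mem _ hqaW)))
  classical
  have hrank := rank_span_finset_le (R := Subring.center R) (M := R) {1, a, q, q * a}
  have htop : Submodule.span (Subring.center R) (({1, a, q, q * a} : Finset R) : Set R) = ⊤ :=
    (Submodule.eq_top_iff'.2 fun r => by simpa using hspan r)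
  rw [htop, rank_top] at hrank
  exact hrank.trans (mod_cast Finset.card_le_four)

end Involution

/-- If `R` is simple, `dim_{Z(R)} R > 4`, `S` is not a commutative set and there exist
`x, y ∈ S` with `xy − yx ≠ 0` and `xSy ⊆ S²`, then `(K∘K)² = R`; in particular `K⁴ = R`. -/
theorem stmt_13 (F R : Type*) [Field F] [Ring R] [Algebra F R] [StarRing R]
    [IsSimpleRing R]
    (hchar : (2 : F) ≠ 0)
    (hfirst : Set.center R ⊆ {r : R | star r = r})
    (hproper : {r : R | star r = r} ≠ Set.univ)
    (hdim : 4 < Module.rank (Subring.center R) R)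
    (hnc : ∃ a ∈ {r : R | star r = r}, ∃ b ∈ {r : R | star r = r}, a * b ≠ b * a)
    (hxy : ∃ x ∈ {r : R | star r = r}, ∃ y ∈ {r : R | star r = r},
      x * y - y * x ≠ 0 ∧
      ∀ s ∈ {r : R | star r = r}, x * s * y ∈
        AddSubgroup.closure {z : R | ∃ a ∈ {r : R | star r = r},
          ∃ b ∈ {r : R | star r = r}, z = a * b}) :
    (AddSubgroup.closure {z : R | ∃ p ∈ jordanKK13 R, ∃ q ∈ jordanKK13 R,
        z = p * q} : Set R) = Set.univ ∧
    (AddSubgroup.closure {z : R | ∃ a₁ ∈ skewSet13 R, ∃ a₂ ∈ skewSet13 R,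
        ∃ a₃ ∈ skewSet13 R, ∃ a₄ ∈ skewSet13 R,
        z = a₁ * a₂ * a₃ * a₄} : Set R) = Set.univ := by
  have hfirst' : ∀ z ∈ Subring.center R, star z = z := fun z hz => hfirst hz
  obtain ⟨h, hc, hh⟩ : ∃ h ∈ Subring.center R, h + h = 1 := by
    refine ⟨algebraMap F R 2⁻¹,
      Subring.mem_center_iff.2 fun g => (Algebra.commutes _ g).symm, ?_⟩
    rw [← map_add, ← two_mul, mul_inv_cancel₀ hchar, map_one]
  have hs := hfirst' h hc
  have h2 : ∀ x : R, x + x = 0 → x = 0 := fun x hx => by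
    rw [← half_mul_add_half_mul hh x, ← mul_add, hx, mul_zero]
  obtain ⟨d, hd, hd0⟩ : ∃ d : R, star d = -d ∧ d ≠ 0 := by
    obtain ⟨r, hr⟩ := (Set.ne_univ_iff_exists_notMem _).1 hproper
    exact ⟨r - star r, by simp, fun h0 => hr (sub_eq_zero.1 h0).symm⟩
  obtain ⟨x, hx, y, hy, hne, hmem⟩ := hxy
  have hS : prodSpan {r : R | star r = r} = ⊤ := prodSpan_symm_eq_top hc hs hh hx hy hne hmem
  have hLie := isLieIdeal_prodSpan_skew hc hs hh
  have hcomm : ∀ r s : R, r * s - s * r ∈ prodSpan (skewSet13 R) := by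
    by_cases hab : ∀ u ∈ prodSpan (skewSet13 R), ∀ v ∈ prodSpan (skewSet13 R), u * v = v * u
    · refine absurd hdim (not_lt.2 ?_)
      exact rank_le_four_of_skew_mul_skew_mem_center hc hs hh hfirst'
        (fun a b ha hb => hLie.mem_center_of_commute h2 hab (mul_mem_prodSpan ha hb))
        hd hd0 hx hy (sub_ne_zero.1 hne)
    · push Not at hab
      obtain ⟨u, hu, v, hv, huv⟩ := hab
      exact hLie.commutator_mem hu hv (sub_ne_zero.2 huv)
  have hK := prodSpan_skew_eq_top hc hs hh hS hd hd0 hcomm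
  constructor
  · have hle : prodSpan {r : R | star r = r} ≤ prodSpan (jordanKK13 R : Set R) :=
      prodSpan_le fun a ha b hb => mul_mem_prodSpan
        (mem_jordanKK13_of_prodSpan_skew_eq_top hc hs hh hK ha)
        (mem_jordanKK13_of_prodSpan_skew_eq_top hc hs hh hK hb)
    have htop : prodSpan (jordanKK13 R : Set R) = ⊤ := top_le_iff.1 (hS ▸ hle)
    exact congrArg (SetLike.coe : AddSubgroup R → Set R) htop
  · set V := AddSubgroup.closure {z : R | ∃ a₁ ∈ skewSet13 R, ∃ a₂ ∈ skewSet13 R,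
        ∃ a₃ ∈ skewSet13 R, ∃ a₄ ∈ skewSet13 R, z = a₁ * a₂ * a₃ * a₄}
    have hle : prodSpan (skewSet13 R) ≤ V := by
      refine prodSpan_le fun a ha b hb => ?_
      have hle' : prodSpan (skewSet13 R) ≤ V.comap (AddMonoidHom.mulLeft (a * b)) :=
        prodSpan_le fun p hp q hq =>
          AddSubgroup.subset_closure ⟨a, ha, b, hb, p, hp, q, hq, by simp [mul_assoc]⟩
      have h1 : (1 : R) ∈ prodSpan (skewSet13 R) := hK ▸ AddSubgroup.mem_top _
      have h1' : a * b * 1 ∈ V := hle' h1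
      rwa [mul_one] at h1'
    have htop : V = ⊤ := top_le_iff.1 (hK ▸ hle)
    rw [htop, AddSubgroup.coe_top]
end
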